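/- Invariance of the FK measure under the single-edge heat-bath (Glauber) update. Let (V, E, ends, α) be a finite graph with boundary condition, p ∈ (0,1), q > 0. For an edge e ∈ E, the heat-bath kernel K_e is the Markov kernel on configurations that, from ω, leaves the states of all edges other than e unchanged and sets the new state of e to open with probability r(ω) and to closed with probability 1−r(ω), where r(ω) = p if the two endpoints of e are connected in the multigraph on V/α with edge set {e' ≠ e : ω e' = true}, and r(ω) = p' = p/(p+q(1−p)) otherwise. Then for every e ∈ E, the FK measure is invariant under K_e: for every configuration ω', ∑_ω φ^α_{G,p,q}({ω}) · K_e(ω, {ω'}) = φ^α_{G,p,q}({ω'}). -/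

import Mathlib

open scoped Classical

noncomputable section

namespace FKPaper

variable {V E : Type*}

/-- One-step adjacency between wired vertices through an edge in `F`. -/
def Step (ends : E → Sym2 V) (α : Setoid V) (F : Set E) (x y : Quotient α) : Prop :=
  ∃ e ∈ F, Sym2.map (Quotient.mk α) (ends e) = s(x, y)

/-- Setoid of connected components of the wired multigraph with edge set `F`. -/
def connSetoid (ends : E → Sym2 V) (α : Setoid V) (F : Set E) : Setoid (Quotient α) :=
  Relation.EqvGen.setoid (Step ends α F)

/-- Connectivity in the wired multigraph with edge set `F`. -/
def Conn (ends : E → Sym2 V) (α : Setoid V) (F : Set E) (x y : Quotient α) : Prop :=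
  (connSetoid ends α F).r x y

/-- The two endpoints of `e` are joined in the wired multigraph with edge set `F`. -/
def EndsConn (ends : E → Sym2 V) (α : Setoid V) (F : Set E) (e : E) : Prop :=
  ∀ x y : V, ends e = s(x, y) → Conn ends α F (Quotient.mk α x) (Quotient.mk α y)

/-- Number of connected components `k(ω, α)`. -/
def numComponents (ends : E → Sym2 V) (α : Setoid V) (ω : E → Bool) : ℕ :=
  Nat.card (Quotient (connSetoid ends α {e | ω e = true}))

/-- `p' = p / (p + q (1 - p))`. -/
def pPrime (p q : ℝ) : ℝ := p / (p + q * (1 - p))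

/-- Total mass of a set under a weight function. -/
def massOf {ι : Type*} [Fintype ι] (w : ι → ℝ) (A : Set ι) : ℝ :=
  ∑ x ∈ Finset.univ.filter (· ∈ A), w x

/-- Normalized probability of a set under a weight function. -/
def probOf {ι : Type*} [Fintype ι] (w : ι → ℝ) (A : Set ι) : ℝ :=
  massOf w A / massOf w Set.univ

/-- FK weight of a configuration. -/
def fkWeight [Fintype E] (ends : E → Sym2 V) (α : Setoid V) (p q : ℝ) (ω : E → Bool) : ℝ :=
  p ^ (Finset.univ.filter fun e => ω e = true).card *
    (1 - p) ^ (Finset.univ.filter fun e => ω e = false).card *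
    q ^ numComponents ends α ω

/-- The FK (random cluster) probability measure `φ^α_{G,p,q}`. -/
def fkProb [Fintype E] (ends : E → Sym2 V) (α : Setoid V) (p q : ℝ)
    (A : Set (E → Bool)) : ℝ :=
  probOf (fkWeight ends α p q) A

/-- Inhomogeneous Bernoulli weight. -/
def berWeight [Fintype E] (pe : E → ℝ) (ω : E → Bool) : ℝ :=
  ∏ e, if ω e = true then pe e else 1 - pe e

/-- Inhomogeneous Bernoulli product measure `P_{(p_e)}`. -/
def berProb [Fintype E] (pe : E → ℝ) (A : Set (E → Bool)) : ℝ :=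
  probOf (berWeight pe) A

/-- Increasing sets of configurations. -/
def Increasing (A : Set (E → Bool)) : Prop :=
  ∀ ⦃ω ω' : E → Bool⦄, ω ∈ A → (∀ e, ω e ≤ ω' e) → ω' ∈ A

/-- Stochastic domination `μ ≼ ν`. -/
def StochDom [Fintype E] (μ ν : Set (E → Bool) → ℝ) : Prop :=
  ∀ A : Set (E → Bool), Increasing A → μ A ≤ ν A

/-- `Q_F(e)`: cutsets for `e` included in `F`. -/
def Cutsets (ends : E → Sym2 V) (α : Setoid V) (F : Set E) (e : E) : Set (Set E) :=
  {χ | χ ⊆ F ∧ ¬ EndsConn ends α {e' | e' ∉ χ ∧ e' ≠ e} e}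


/-- Probability that the heat-bath update at `e` opens the edge. -/
def heatBathRate [Fintype E] (ends : E → Sym2 V) (α : Setoid V) (p q : ℝ) (e : E)
    (ω : E → Bool) : ℝ :=
  if EndsConn ends α {e' | e' ≠ e ∧ ω e' = true} e then p else pPrime p q

/-- The heat-bath (Glauber) kernel at edge `e`: `heatBath ends α p q e ω {ω'}` is the
probability of moving from `ω` to `ω'`. -/
def heatBath [Fintype E] (ends : E → Sym2 V) (α : Setoid V) (p q : ℝ) (e : E)
    (ω ω' : E → Bool) : ℝ :=
  if ∀ e' ≠ e, ω' e' = ω e' then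
    (if ω' e = true then heatBathRate ends α p q e ω
     else 1 - heatBathRate ends α p q e ω)
  else 0

/-!
The heat-bath update at `e` is reversible for the FK weight `w`, and reversible kernels preserve
their weight. A jump of positive probability between distinct configurations only toggles `e`, so
reversibility reduces to `w(ω^e) (1 - r) = w(ω_e) r`, where `ω^e` and `ω_e` are `ω` with `e` opened
and closed. The edge factors contribute a ratio `p / (1 - p)` to `w(ω^e) / w(ω_e)`. If the endpoints
of `e` are already joined by the other open edges, opening `e` changes no component and `r = p`;
otherwise it merges two components into one, the ratio is `p / (q (1 - p))`, and `r = p'`.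
-/

theorem sum_mul_eq_of_detailedBalance {ι R : Type*} [Fintype ι] [NonAssocSemiring R]
    {w : ι → R} {K : ι → ι → R} {j : ι} (hK : ∑ i, K j i = 1)
    (hw : ∀ i, w i * K i j = w j * K j i) : ∑ i, w i * K i j = w j := by
  simp only [hw, ← Finset.mul_sum, hK, mul_one]

theorem sum_ite_forall_ne_eq {ι β M : Type*} [Fintype ι] [DecidableEq ι] [Fintype β]
    [AddCommMonoid M] (f : (ι → β) → M) (i : ι) (g : ι → β)
    [DecidablePred fun h : ι → β ↦ ∀ j ≠ i, h j = g j] :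
    (∑ h : ι → β, if ∀ j ≠ i, h j = g j then f h else 0) =
      ∑ b, f (Function.update g i b) := by
  rw [← Finset.sum_filter]
  have hupdate (h : ι → β) (hh : ∀ j ≠ i, h j = g j) : Function.update g i (h i) = h :=
    (Function.eq_update_iff.2 ⟨rfl, hh⟩).symm
  refine Finset.sum_nbij' (fun h ↦ h i) (Function.update g i) ?_ ?_ ?_ ?_ ?_ <;>
    simp +contextual [hupdate]

section Identify

variable {X : Type*} {s t : Setoid X} {x y : X}

theorem forall_mk_eq_mk_imp_rel_iff :
    (∀ a b, s(x, y) = s(a, b) → s a b) ↔ s x y := by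
  refine ⟨fun h ↦ h x y rfl, fun h a b hab ↦ ?_⟩
  rcases Sym2.eq_iff.1 hab with ⟨rfl, rfl⟩ | ⟨rfl, rfl⟩
  exacts [h, s.symm h]

/-- The equivalence relation obtained from `s` by identifying `x` with `y`, encoded as the kernel of
the map that sends the class of `y` to the class of `x` and fixes all other classes. -/
def identify (s : Setoid X) (x y : X) : Setoid X :=
  Setoid.ker (Function.update id ⟦y⟧ ⟦x⟧ ∘ Quotient.mk s)

theorem identify_le_iff : identify s x y ≤ t ↔ s ≤ t ∧ t x y := by
  constructor
  · intro h
    refine ⟨fun a b hab ↦ h ?_, h ?_⟩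
    · exact congrArg (Function.update id ⟦y⟧ ⟦x⟧) (Quotient.sound hab)
    · change Function.update id _ _ _ = Function.update id _ _ _
      by_cases hxy : (⟦x⟧ : Quotient s) = ⟦y⟧
      · rw [hxy]
      · rw [Function.update_self, Function.update_of_ne hxy, id]
  · rintro ⟨hst, hxy⟩ a b hab
    let π : Quotient s → Quotient t := Quotient.map id hst
    have hπ : π ∘ Function.update id ⟦y⟧ ⟦x⟧ = π := by
      rw [Function.comp_update, Function.comp_id, Function.update_eq_self_iff]
      exact Quotient.sound hxy
    have hπab : π ⟦a⟧ = π ⟦b⟧ := by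
      rw [← hπ]
      exact congrArg π hab
    exact Quotient.exact hπab

theorem identify_eq_self (h : s x y) : identify s x y = s :=
  le_antisymm (identify_le_iff.2 ⟨le_rfl, h⟩) (identify_le_iff.1 le_rfl).1

theorem range_update_id [DecidableEq X] {a b : X} (h : a ≠ b) :
    Set.range (Function.update id b a) = {b}ᶜ := by
  ext c
  constructor
  · rintro ⟨d, rfl⟩
    by_cases hd : d = b <;> simp [hd, h]
  · exact fun hc ↦ ⟨c, Function.update_of_ne hc _ _⟩

theorem card_quotient_identify_add_one [Finite (Quotient s)] (h : ¬ s x y) :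
    Nat.card (Quotient (identify s x y)) + 1 = Nat.card (Quotient s) := by
  have hne : (⟦x⟧ : Quotient s) ≠ ⟦y⟧ := fun hxy ↦ h (Quotient.exact hxy)
  rw [identify, Nat.card_congr (Setoid.quotientKerEquivRange _),
    Quotient.mk_surjective.range_comp, range_update_id hne, Nat.card_coe_set_eq, add_comm,
    ← Set.ncard_singleton (⟦y⟧ : Quotient s), Set.ncard_add_ncard_compl]

end Identify

section Components

variable {ends : E → Sym2 V} {α : Setoid V} {F : Set E} {e : E} {x y : V} {ω : E → Bool}

theorem connSetoid_le_iff {t : Setoid (Quotient α)} :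
    connSetoid ends α F ≤ t ↔ ∀ e ∈ F, ∀ x y, ends e = s(x, y) → t ⟦x⟧ ⟦y⟧ := by
  constructor
  · exact fun h e he x y hxy ↦ h (.rel _ _ ⟨e, he, by rw [hxy, Sym2.map_mk]⟩)
  · refine fun h ↦ Setoid.eqvGen_le ?_
    rintro a b ⟨e, he, hab⟩
    induction hxy : ends e with | _ x y
    rw [hxy, Sym2.map_mk] at hab
    exact forall_mk_eq_mk_imp_rel_iff.2 (h e he x y hxy) a b hab

theorem endsConn_iff (he : ends e = s(x, y)) :
    EndsConn ends α F e ↔ connSetoid ends α F ⟦x⟧ ⟦y⟧ := by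
  rw [EndsConn, he]
  exact forall_mk_eq_mk_imp_rel_iff (s := (connSetoid ends α F).comap (Quotient.mk α))

theorem connSetoid_insert (he : ends e = s(x, y)) :
    connSetoid ends α (insert e F) = identify (connSetoid ends α F) ⟦x⟧ ⟦y⟧ := by
  refine eq_of_forall_ge_iff fun t ↦ ?_
  rw [identify_le_iff, connSetoid_le_iff, connSetoid_le_iff, Set.forall_mem_insert, and_comm, he]
  exact and_congr_right' (forall_mk_eq_mk_imp_rel_iff (s := t.comap (Quotient.mk α)))

theorem setOf_update_true :
    {e' | Function.update ω e true e' = true} = insert e {e' | e' ≠ e ∧ ω e' = true} := by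
  ext e'
  by_cases h : e' = e <;> simp [h]

theorem setOf_update_false :
    {e' | Function.update ω e false e' = true} = {e' | e' ≠ e ∧ ω e' = true} := by
  ext e'
  by_cases h : e' = e <;> simp [h]

theorem numComponents_update_of_endsConn
    (h : EndsConn ends α {e' | e' ≠ e ∧ ω e' = true} e) :
    numComponents ends α (Function.update ω e true) =
      numComponents ends α (Function.update ω e false) := by
  induction he : ends e with | _ x y
  rw [numComponents, numComponents, setOf_update_true, setOf_update_false, connSetoid_insert he,
    identify_eq_self ((endsConn_iff he).1 h)]

theorem numComponents_update_of_not_endsConn [Finite (Quotient α)]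
    (h : ¬ EndsConn ends α {e' | e' ≠ e ∧ ω e' = true} e) :
    numComponents ends α (Function.update ω e true) + 1 =
      numComponents ends α (Function.update ω e false) := by
  induction he : ends e with | _ x y
  rw [numComponents, numComponents, setOf_update_true, setOf_update_false, connSetoid_insert he,
    card_quotient_identify_add_one (mt (endsConn_iff he).2 h)]

end Components

section Weights

variable [Fintype E]

theorem berWeight_update_balance (pe : E → ℝ) (ω : E → Bool) (e : E) :
    berWeight pe (Function.update ω e true) * (1 - pe e) =
      berWeight pe (Function.update ω e false) * pe e := by
  have hrest (b : Bool) : ∏ e' ∈ Finset.univ.erase e,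
        (if Function.update ω e b e' = true then pe e' else 1 - pe e') =
      ∏ e' ∈ Finset.univ.erase e, if ω e' = true then pe e' else 1 - pe e' :=
    Finset.prod_congr rfl fun e' he' ↦ by rw [Function.update_of_ne (Finset.ne_of_mem_erase he')]
  simp only [berWeight, ← Finset.mul_prod_erase Finset.univ _ (Finset.mem_univ e), hrest,
    Function.update_self, if_true, Bool.false_eq_true, if_false]
  ring

variable {ends : E → Sym2 V} {α : Setoid V} {p q : ℝ}

theorem fkWeight_eq_berWeight_mul (ω : E → Bool) :
    fkWeight ends α p q ω = berWeight (fun _ ↦ p) ω * q ^ numComponents ends α ω := by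
  simp only [fkWeight, berWeight, Finset.prod_ite, Finset.prod_const, Bool.not_eq_true]

theorem fkProb_singleton (ω : E → Bool) :
    fkProb ends α p q {ω} = fkWeight ends α p q ω / massOf (fkWeight ends α p q) Set.univ := by
  simp [fkProb, probOf, massOf, Finset.filter_eq']

theorem one_sub_pPrime (h : p + q * (1 - p) ≠ 0) :
    1 - pPrime p q = q * (1 - p) / (p + q * (1 - p)) := by
  rw [pPrime, one_sub_div h, add_sub_cancel_left]

theorem fkWeight_update_balance [Finite (Quotient α)] (h : p + q * (1 - p) ≠ 0) (e : E)
    (ω : E → Bool) :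
    fkWeight ends α p q (Function.update ω e true) * (1 - heatBathRate ends α p q e ω) =
      fkWeight ends α p q (Function.update ω e false) * heatBathRate ends α p q e ω := by
  have hber := berWeight_update_balance (fun _ ↦ p) ω e
  simp only [fkWeight_eq_berWeight_mul, heatBathRate]
  split_ifs with he
  · rw [numComponents_update_of_endsConn he]
    linear_combination q ^ numComponents ends α (Function.update ω e false) * hber
  · rw [← numComponents_update_of_not_endsConn he, one_sub_pPrime h, pPrime]
    linear_combination
      q ^ (numComponents ends α (Function.update ω e true) + 1) / (p + q * (1 - p)) * hber

end Weights

section HeatBath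

variable [Fintype E] {ends : E → Sym2 V} {α : Setoid V} {p q : ℝ} {e : E} {ω ω' : E → Bool}

theorem heatBathRate_congr (h : ∀ e' ≠ e, ω' e' = ω e') :
    heatBathRate ends α p q e ω' = heatBathRate ends α p q e ω := by
  have hset : {e' | e' ≠ e ∧ ω' e' = true} = {e' | e' ≠ e ∧ ω e' = true} :=
    Set.ext fun e' ↦ and_congr_right fun he' ↦ by rw [h e' he']
  rw [heatBathRate, heatBathRate, hset]

theorem heatBath_update (a b : Bool) :
    heatBath ends α p q e (Function.update ω e a) (Function.update ω e b) =
      if b = true then heatBathRate ends α p q e ω else 1 - heatBathRate ends α p q e ω := by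
  have hrate : heatBathRate ends α p q e (Function.update ω e a) = heatBathRate ends α p q e ω :=
    heatBathRate_congr fun e' he' ↦ Function.update_of_ne he' _ _
  simp +contextual [heatBath, hrate]

theorem sum_heatBath (ω : E → Bool) : ∑ ω', heatBath ends α p q e ω ω' = 1 := by
  simp only [heatBath, sum_ite_forall_ne_eq, Function.update_self, Fintype.sum_bool, if_true,
    Bool.false_eq_true, if_false, add_sub_cancel]

theorem fkWeight_update_mul_heatBath_comm [Finite (Quotient α)] (h : p + q * (1 - p) ≠ 0)
    (a b : Bool) :
    fkWeight ends α p q (Function.update ω e a) *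
        heatBath ends α p q e (Function.update ω e a) (Function.update ω e b) =
      fkWeight ends α p q (Function.update ω e b) *
        heatBath ends α p q e (Function.update ω e b) (Function.update ω e a) := by
  have hbal := fkWeight_update_balance (ends := ends) (α := α) h e ω
  simp only [heatBath_update]
  cases a <;> cases b
  exacts [rfl, hbal.symm, hbal, rfl]

theorem fkWeight_mul_heatBath_comm [Finite (Quotient α)] (h : p + q * (1 - p) ≠ 0) (e : E)
    (ω ω' : E → Bool) :
    fkWeight ends α p q ω * heatBath ends α p q e ω ω' =
      fkWeight ends α p q ω' * heatBath ends α p q e ω' ω := by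
  by_cases hω : ∀ e' ≠ e, ω' e' = ω e'
  · have hω' : Function.update ω e (ω' e) = ω' := (Function.eq_update_iff.2 ⟨rfl, hω⟩).symm
    simpa only [Function.update_eq_self, hω'] using
      fkWeight_update_mul_heatBath_comm (ω := ω) (e := e) h (ω e) (ω' e)
  · have hω' : ¬ ∀ e' ≠ e, ω e' = ω' e' := by simpa only [eq_comm] using hω
    rw [heatBath, heatBath, if_neg hω, if_neg hω', mul_zero, mul_zero]

end HeatBath

/-- Stated for the weights, since the partition function can vanish when `p` and `q` do not define a
probability measure. -/
theorem fk_invariant_heatBath_general {V E : Type*} [Fintype E]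
    (ends : E → Sym2 V) (α : Setoid V) [Finite (Quotient α)] (p q : ℝ)
    (h : p + q * (1 - p) ≠ 0) (e : E) (ω' : E → Bool) :
    ∑ ω, fkWeight ends α p q ω * heatBath ends α p q e ω ω' = fkWeight ends α p q ω' :=
  sum_mul_eq_of_detailedBalance (sum_heatBath ω') fun ω ↦ fkWeight_mul_heatBath_comm h e ω ω'

/-- **Invariance of the FK measure under the single-edge heat-bath (Glauber) update.** -/
theorem fk_invariant_heatBath
    {V E : Type*} [Fintype V] [Fintype E]
    (ends : E → Sym2 V) (α : Setoid V)
    (p q : ℝ) (hp : p ∈ Set.Ioo (0 : ℝ) 1) (hq : 0 < q) (e : E) :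
    ∀ ω' : E → Bool,
      ∑ ω : E → Bool, fkProb ends α p q {ω} * heatBath ends α p q e ω ω'
        = fkProb ends α p q {ω'} := by
  intro ω'
  have h : p + q * (1 - p) ≠ 0 := (add_pos hp.1 (mul_pos hq (sub_pos.2 hp.2))).ne'
  simp only [fkProb_singleton, div_mul_eq_mul_div, ← Finset.sum_div,
    fk_invariant_heatBath_general ends α p q h]

end FKPaper
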